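/- Second inclusion in the proof of Proposition 3 (formal version): for every k ≥ 1, s^k·A ⊆ ⟨x₁,…,xₙ⟩^k·A + M, where ⟨x₁,…,xₙ⟩·A denotes the ideal of A generated by the variables x₁,…,xₙ (not including s). Equivalently, s^k·H is contained in the image in H = A/M of the ideal ⟨x₁,…,xₙ⟩^k·A. -/

import Mathlib

noncomputable section

open scoped Pointwise

/-- The formal partial derivative `∂ᵢ` with respect to the `i`th variable, determined by
`coeff α (∂ᵢ g) = (α i + 1) • coeff (α + eᵢ) g`. -/
def pd {σ : Type*} (i : σ) (g : MvPowerSeries σ ℂ) : MvPowerSeries σ ℂ :=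
  fun α => ((α i : ℂ) + 1) * MvPowerSeries.coeff (α + Finsupp.single i 1) g

lemma coeff_pd {σ : Type*} (i : σ) (g : MvPowerSeries σ ℂ) (α : σ →₀ ℕ) :
    MvPowerSeries.coeff α (pd i g) =
      ((α i : ℂ) + 1) * MvPowerSeries.coeff (α + Finsupp.single i 1) g := rfl

variable (n : ℕ)

/-- `R = ℂ[[x₁,…,xₙ]]`. -/
abbrev R' := MvPowerSeries (Fin n) ℂ

/-- `A = ℂ[[s,x₁,…,xₙ]]`, where `s` is the 0th variable and `xᵢ` is the variable
of index `i` (`1 ≤ i ≤ n`). -/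
abbrev A' := MvPowerSeries (Fin (n + 1)) ℂ

/-- The variable `s` of `A`. -/
def sv : A' n := MvPowerSeries.X 0

/-- Forget the `s`-exponent of a multi-index of `A`. -/
def tailF (β : Fin (n + 1) →₀ ℕ) : Fin n →₀ ℕ :=
  Finsupp.equivFunOnFinite.symm fun i => β i.succ

/-- The inclusion `R ⊆ A` as the subring of series not involving `s`. -/
def inclR (g : R' n) : A' n :=
  fun β => if β 0 = 0 then MvPowerSeries.coeff (tailF n β) g else 0

/-- The inclusion `ℂ[[s]] ⊆ A` as the subring of series in `s` alone. -/
def toA (p : PowerSeries ℂ) : A' n :=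
  fun β => if tailF n β = 0 then PowerSeries.coeff (β 0) p else 0

lemma coeff_inclR (g : R' n) (β : Fin (n + 1) →₀ ℕ) :
    MvPowerSeries.coeff β (inclR n g) =
      if β 0 = 0 then MvPowerSeries.coeff (tailF n β) g else 0 := rfl

/-- The `ℂ[[s]]`-linear operator `Fᵢ(g) = ∂ᵢ(f)·g − s·∂ᵢ(g)` on `A`. -/
def FF (f : R' n) (i : Fin n) (g : A' n) : A' n :=
  inclR n (pd i f) * g - sv n * pd i.succ g

/-- `M = range F₁ + ⋯ + range Fₙ`, so that `H = A/M` is the formal Brieskorn lattice. -/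
def Mset (f : R' n) : Set (A' n) :=
  {a | ∃ q : Fin n → A' n, a = ∑ i, FF n f i (q i)}

/-- The Jacobian ideal `J(f) = ⟨∂₁f,…,∂ₙf⟩` of `R`. -/
def Jf (f : R' n) : Ideal (R' n) :=
  Ideal.span (Set.range fun i : Fin n => pd i f)

/-- The maximal ideal `⟨x₁,…,xₙ⟩` of `R = ℂ[[x₁,…,xₙ]]`. -/
def mx : Ideal (R' n) :=
  Ideal.span (Set.range (MvPowerSeries.X : Fin n → R' n))

/-- The ideal `J(f)·A` of `A` generated by `∂₁(f),…,∂ₙ(f)`. -/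
def JA (f : R' n) : Ideal (A' n) :=
  Ideal.span (Set.range fun i : Fin n => inclR n (pd i f))

/-- The ideal `⟨x₁,…,xₙ⟩·A` of `A` generated by the variables `x₁,…,xₙ` (not `s`). -/
def XA : Ideal (A' n) :=
  Ideal.span (Set.range fun i : Fin n => (MvPowerSeries.X i.succ : A' n))

lemma pd_add {σ : Type*} (i : σ) (a b : MvPowerSeries σ ℂ) :
    pd i (a + b) = pd i a + pd i b := by
  ext α; simp [coeff_pd, mul_add]

lemma pd_smul {σ : Type*} (i : σ) (c : ℂ) (a : MvPowerSeries σ ℂ) :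
    pd i (c • a) = c • pd i a := by
  ext α; simp [coeff_pd]; ring

lemma FF_add (f : R' n) (i : Fin n) (a b : A' n) :
    FF n f i (a + b) = FF n f i a + FF n f i b := by
  simp only [FF, pd_add, mul_add]; ring

lemma FF_smul (f : R' n) (i : Fin n) (c : ℂ) (a : A' n) :
    FF n f i (c • a) = c • FF n f i a := by
  simp only [FF, pd_smul, Algebra.mul_smul_comm, smul_sub]

lemma FF_zero (f : R' n) (i : Fin n) : FF n f i 0 = 0 := by
  simpa using FF_smul n f i 0 0

/-- `M` as a `ℂ`-submodule of `A`. -/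
def Msub (f : R' n) : Submodule ℂ (A' n) where
  carrier := Mset n f
  zero_mem' := ⟨0, by simp [FF_zero]⟩
  add_mem' := by
    rintro a b ⟨q, rfl⟩ ⟨q', rfl⟩
    exact ⟨q + q', by simp [FF_add, Finset.sum_add_distrib]⟩
  smul_mem' := by
    rintro c a ⟨q, rfl⟩
    exact ⟨c • q, by simp [FF_smul, Finset.smul_sum]⟩

/-- The inclusion `R ⊆ A` as a `ℂ`-linear map. -/
def inclL : R' n →ₗ[ℂ] A' n where
  toFun := inclR n
  map_add' a b := by
    ext β; simp only [coeff_inclR, map_add]; split <;> simp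
  map_smul' c a := by
    ext β; simp only [coeff_inclR, map_smul, RingHom.id_apply]; split <;> simp

/-!
Let `J` be formal integration in `xᵢ`, so that `∂ᵢ J = 1`. Applying `Fᵢ` to `J b` shows
`s·b ≡ ∂ᵢ(f)·J b` modulo the range of `Fᵢ`. If `xᵢ^k` divides `b`, then `xᵢ^(k+1)` divides `J b`:
each factor `s` can be traded for one more factor `xᵢ`. The range of `Fᵢ` is stable under
multiplication by `s`, so the trade can be iterated, and a single variable suffices.
-/

section TwistedDeriv

variable {K A : Type*} [CommSemiring K] [CommRing A] [Algebra K A]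

/-- The twisted derivation `g ↦ h·g − t·D g`. For `D = ∂ᵢ`, `h = ∂ᵢ f` and `t = s` it is the
operator `Fᵢ` defining the Brieskorn lattice. -/
def twistedDeriv (D : Derivation K A A) (h t : A) : A →ₗ[K] A :=
  LinearMap.mulLeft K h - t • D.toLinearMap

lemma twistedDeriv_apply (D : Derivation K A A) (h t g : A) :
    twistedDeriv D h t g = h * g - t * D g := rfl

lemma twistedDeriv_mul_of_apply_eq_zero (D : Derivation K A A) (h : A) {t : A} (ht : D t = 0)
    (g : A) : twistedDeriv D h t (t * g) = t * twistedDeriv D h t g := by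
  simp only [twistedDeriv_apply, D.leibniz, ht, smul_eq_mul]
  ring

end TwistedDeriv

section Antideriv

open MvPowerSeries

variable {σ K : Type*} [CommRing K] [Algebra ℚ K]

/-- Formal integration in the variable `i`, with zero integration constant: the coefficients at
multi-indices `d` with `d i = 0` vanish because `0⁻¹ = 0` in `ℚ`. -/
def antideriv (i : σ) (g : MvPowerSeries σ K) : MvPowerSeries σ K :=
  fun d => (d i : ℚ)⁻¹ • coeff (d - Finsupp.single i 1) g

lemma coeff_antideriv (i : σ) (g : MvPowerSeries σ K) (d : σ →₀ ℕ) :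
    coeff d (antideriv i g) = (d i : ℚ)⁻¹ • coeff (d - Finsupp.single i 1) g := rfl

lemma pderiv_antideriv (i : σ) (g : MvPowerSeries σ K) : pderiv K i (antideriv i g) = g := by
  ext d
  have hd : ((d i + 1 : ℕ) : ℚ) ≠ 0 := Nat.cast_ne_zero.2 (Nat.succ_ne_zero _)
  rw [coeff_pderiv, coeff_antideriv, add_tsub_cancel_right, Finsupp.add_apply,
    Finsupp.single_eq_same, ← Nat.cast_succ, mul_comm, ← nsmul_eq_mul,
    ← Nat.cast_smul_eq_nsmul ℚ, smul_inv_smul₀ hd]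

lemma X_pow_succ_dvd_antideriv (i : σ) {k : ℕ} {g : MvPowerSeries σ K} (hg : X i ^ k ∣ g) :
    X i ^ (k + 1) ∣ antideriv i g := by
  rw [X_pow_dvd_iff] at hg ⊢
  intro d hd
  rw [coeff_antideriv]
  obtain h0 | hpos := Nat.eq_zero_or_pos (d i)
  · rw [h0, Nat.cast_zero, inv_zero, zero_smul]
  · have hlt : (d - Finsupp.single i 1 : σ →₀ ℕ) i < k := by
      rw [Finsupp.tsub_apply, Finsupp.single_eq_same]
      omega
    rw [hg _ hlt, smul_zero]

lemma exists_X_pow_mul_add_twistedDeriv_eq (i : σ) (h : MvPowerSeries σ K)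
    {t : MvPowerSeries σ K} (ht : pderiv K i t = 0) (a : MvPowerSeries σ K) (k : ℕ) :
    ∃ b g, X i ^ k * b + twistedDeriv (pderiv K i) h t g = t ^ k * a := by
  induction k with
  | zero => exact ⟨a, 0, by simp⟩
  | succ k ih =>
    obtain ⟨b, g, hbg⟩ := ih
    let u := antideriv i (X i ^ k * b)
    obtain ⟨c, hc⟩ : X i ^ (k + 1) ∣ u := X_pow_succ_dvd_antideriv i (dvd_mul_right _ b)
    have trade : t * (X i ^ k * b) = X i ^ (k + 1) * (h * c) - twistedDeriv (pderiv K i) h t u := by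
      rw [twistedDeriv_apply, pderiv_antideriv, hc]
      ring
    refine ⟨h * c, t * g - u, ?_⟩
    rw [map_sub, twistedDeriv_mul_of_apply_eq_zero _ h ht]
    linear_combination t * hbg - trade

theorem brieskorn_second_inclusion_general (i : σ) (h : MvPowerSeries σ K)
    {t : MvPowerSeries σ K} (ht : pderiv K i t = 0) (k : ℕ) :
    ((Ideal.span {t ^ k} : Ideal (MvPowerSeries σ K)) : Set (MvPowerSeries σ K)) ⊆
      ((Ideal.span {X i ^ k} : Ideal (MvPowerSeries σ K)) : Set (MvPowerSeries σ K)) +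
        Set.range (twistedDeriv (pderiv K i) h t) := by
  intro x hx
  obtain ⟨a, rfl⟩ := Ideal.mem_span_singleton.1 hx
  obtain ⟨b, g, hbg⟩ := exists_X_pow_mul_add_twistedDeriv_eq i h ht a k
  exact ⟨_, Ideal.mem_span_singleton.2 (dvd_mul_right _ b), _, Set.mem_range_self g, hbg⟩

end Antideriv

section BrieskornLattice

open MvPowerSeries

variable {n}

lemma pd_eq_pderiv {σ : Type*} (i : σ) (g : MvPowerSeries σ ℂ) : pd i g = pderiv ℂ i g := by
  ext d
  rw [coeff_pd, coeff_pderiv, mul_comm]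

lemma pderiv_succ_sv (i : Fin n) : pderiv ℂ i.succ (sv n) = 0 :=
  pderiv_X_of_ne (Fin.succ_ne_zero i).symm

lemma twistedDeriv_eq_FF (f : R' n) (i : Fin n) (g : A' n) :
    twistedDeriv (pderiv ℂ i.succ) (inclR n (pd i f)) (sv n) g = FF n f i g := by
  rw [twistedDeriv_apply, FF, pd_eq_pderiv i.succ]

lemma FF_mem_Mset (f : R' n) (i : Fin n) (g : A' n) : FF n f i g ∈ Mset n f := by
  refine ⟨Pi.single i g, ?_⟩
  rw [Fintype.sum_eq_single i fun j hj => by rw [Pi.single_eq_of_ne hj, FF_zero],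
    Pi.single_eq_same]

lemma range_twistedDeriv_subset_Mset (f : R' n) (i : Fin n) :
    Set.range (twistedDeriv (pderiv ℂ i.succ) (inclR n (pd i f)) (sv n)) ⊆ Mset n f :=
  Set.range_subset_iff.2 fun g => twistedDeriv_eq_FF f i g ▸ FF_mem_Mset f i g

lemma span_X_succ_pow_le_XA_pow (i : Fin n) (k : ℕ) :
    Ideal.span {(X i.succ : A' n) ^ k} ≤ XA n ^ k :=
  (Ideal.span_singleton_le_iff_mem _).2 <|
    Ideal.pow_mem_pow (Ideal.subset_span (Set.mem_range_self i)) k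

end BrieskornLattice

/-- **Second inclusion in the proof of Proposition 3 (formal version)**: for every
`k ≥ 1`, `s^k·A ⊆ ⟨x₁,…,xₙ⟩^k·A + M`. -/
theorem brieskorn_second_inclusion (n : ℕ) (hn : 1 ≤ n) (f : R' n)
    (hf0 : MvPowerSeries.constantCoeff f = 0)
    (m : ℕ) (hm : 1 ≤ m) (hiso : mx n ^ m ≤ Jf n f) :
    ∀ k : ℕ, 1 ≤ k →
      ((Ideal.span {sv n ^ k} : Ideal (A' n)) : Set (A' n)) ⊆
        ((XA n ^ k : Ideal (A' n)) : Set (A' n)) + Mset n f := by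
  intro k _
  exact (brieskorn_second_inclusion_general _ _ (pderiv_succ_sv ⟨0, hn⟩) k).trans <|
    Set.add_subset_add (span_X_succ_pow_le_XA_pow _ k) (range_twistedDeriv_subset_Mset f _)
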